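/- Suppose there exist vectors x^v, z^v, g^v, h^v ∈ ℝ^m for v = 1,…,M and vectors d^v ∈ ℝ^m (representing ∇f_v(x^v)) such that: (i) z^v = x^v − Σ_{u=1}^M w_{vu} x^u − μ(d^v − g^v) for all v; (ii) ρ[d^v − g^v + (1/μ)(z^v − x^v)] + α(h^v − g^v) = 0 for all v; and (iii) Σ_{u=1}^M q_{vu}(h^u − g^u) = 0 for all v. If ker(Q) = ker(Wᵀ), ker(W) = span{1}, μ > 0 and ρ ≠ 0, then the matrix X whose rows are the x^v satisfies Q W X = 0 and consequently W X = 0; hence all the x^v are equal, i.e. the stopping point is a consensus point. -/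

import Mathlib

/-!
Eliminating `z` from (i) and (ii) leaves `W X = (μ α / ρ) (H - G)`, which `Q` annihilates by (iii).
Since `ker Q ⊆ ker Wᵀ`, also `Wᵀ W X = 0`, and positivity of the sum of squares `(W y)ᵀ (W y)`
gives `W X = 0`. Linear functionals reduce vector-valued agents to the scalar kernel hypotheses,
so the agents may take values in any vector space.
-/

namespace DAGP

open Matrix Module
-- The scoped action of `A : Matrix ι ι R` on `x : ι → E` is `(A • x) i = ∑ j, A i j • x j`.
open scoped Matrix.Module

theorem pi_eq_zero_iff_forall_linearForm_comp {ι R E : Type*} [Semiring R] [AddCommMonoid E]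
    [Module R E] [Projective R E] {x : ι → E} : x = 0 ↔ ∀ φ : Dual R E, φ ∘ x = 0 := by
  simp_rw [funext_iff]
  rw [forall_comm]
  exact forall_congr' fun i ↦ (forall_dual_apply_eq_zero_iff R (x i)).symm

section MatrixAction

variable {ι R E : Type*} [Fintype ι] [DecidableEq ι] [Ring R] [AddCommGroup E] [Module R E]

instance {S : Type*} [DistribSMul S E] [SMulCommClass R S E] :
    SMulCommClass (Matrix ι ι R) S (ι → E) where
  smul_comm A c x := by
    ext i
    simp [Finset.smul_sum, smul_comm]

theorem of_matrix_smul {κ : Type*} (A : Matrix ι ι R) (x : ι → κ → R) :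
    Matrix.of (A • x) = A * Matrix.of x := by
  ext i k
  simp [Matrix.mul_apply]

theorem linearForm_comp_matrix_smul (φ : Dual R E) (A : Matrix ι ι R) (x : ι → E) :
    φ ∘ (A • x) = A *ᵥ (φ ∘ x) := by
  ext i
  simp [mulVec, dotProduct]

theorem apply_eq_apply_of_matrix_smul_eq_zero [Projective R E]
    {A : Matrix ι ι R} (hA : ∀ y : ι → R, A *ᵥ y = 0 → ∃ c, y = fun _ ↦ c)
    {x : ι → E} (hx : A • x = 0) (u v : ι) : x u = x v := by
  rw [← sub_eq_zero, ← forall_dual_apply_eq_zero_iff R]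
  intro φ
  have hφ : A *ᵥ (φ ∘ x) = 0 := by
    rw [← linearForm_comp_matrix_smul, pi_eq_zero_iff_forall_linearForm_comp.1 hx φ]
  obtain ⟨c, hc⟩ := hA _ hφ
  rw [map_sub, sub_eq_zero]
  exact (congrFun hc u).trans (congrFun hc v).symm

end MatrixAction

section Kernel

variable {𝕜 : Type*} [Field 𝕜] [LinearOrder 𝕜] [IsStrictOrderedRing 𝕜]

theorem mulVec_eq_zero_of_mulVec_mulVec_eq_zero {l m n : Type*} [Fintype m] [Fintype n]
    {Q : Matrix l m 𝕜} {W : Matrix m n 𝕜} (hker : ∀ y, Q *ᵥ y = 0 → Wᵀ *ᵥ y = 0)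
    {y : n → 𝕜} (hy : Q *ᵥ (W *ᵥ y) = 0) : W *ᵥ y = 0 := by
  have hmem : y ∈ LinearMap.ker (Wᵀ * W).mulVecLin := by
    rw [LinearMap.mem_ker, mulVecLin_apply, ← mulVec_mulVec]
    exact hker _ hy
  rwa [ker_mulVecLin_transpose_mul_self] at hmem

theorem matrix_smul_eq_zero_of_smul_smul_eq_zero {ι E : Type*} [Fintype ι] [DecidableEq ι]
    [AddCommGroup E] [Module 𝕜 E] {Q W : Matrix ι ι 𝕜}
    (hker : ∀ y, Q *ᵥ y = 0 → Wᵀ *ᵥ y = 0) {x : ι → E} (hx : Q • W • x = 0) : W • x = 0 := by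
  rw [pi_eq_zero_iff_forall_linearForm_comp (R := 𝕜)] at hx ⊢
  simp only [linearForm_comp_matrix_smul] at hx ⊢
  exact fun φ ↦ mulVec_eq_zero_of_mulVec_mulVec_eq_zero hker (hx φ)

end Kernel

theorem eq_smul_of_stationary {𝕜 E : Type*} [Field 𝕜] [AddCommGroup E] [Module 𝕜 E]
    {μ ρ α : 𝕜} (hμ : μ ≠ 0) (hρ : ρ ≠ 0) {x y z p q : E} (hz : z = x - y - μ • p)
    (hg : ρ • (p + μ⁻¹ • (z - x)) + α • q = 0) : y = (μ * α / ρ) • q := by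
  have hy : y = -(μ • (p + μ⁻¹ • (z - x))) := by
    rw [smul_add, smul_inv_smul₀ hμ, hz]
    abel
  have hq : p + μ⁻¹ • (z - x) = -((ρ⁻¹ * α) • q) := by
    rw [mul_smul, ← smul_neg, eq_inv_smul_iff₀ hρ, eq_neg_of_add_eq_zero_left hg]
  rw [hy, hq]
  module

end DAGP

open DAGP in
open scoped Matrix Matrix.Module in
theorem dagp_stopping_point_consensus_general {𝕜 ι E : Type*}
    [Field 𝕜] [LinearOrder 𝕜] [IsStrictOrderedRing 𝕜] [Fintype ι] [DecidableEq ι]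
    [AddCommGroup E] [Module 𝕜 E] {W Q : Matrix ι ι 𝕜}
    (hkerQ : ∀ y : ι → 𝕜, Q *ᵥ y = 0 → Wᵀ *ᵥ y = 0)
    (hkerW : ∀ y : ι → 𝕜, W *ᵥ y = 0 → ∃ c : 𝕜, y = fun _ ↦ c)
    {μ ρ α : 𝕜} (hμ : μ ≠ 0) (hρ : ρ ≠ 0) {x z g h d : ι → E}
    (hz : z = x - W • x - μ • (d - g))
    (hg : ρ • (d - g + μ⁻¹ • (z - x)) + α • (h - g) = 0)
    (hh : Q • (h - g) = 0) :
    Q • W • x = 0 ∧ W • x = 0 ∧ ∀ u v, x u = x v := by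
  have hWx : W • x = (μ * α / ρ) • (h - g) := eq_smul_of_stationary hμ hρ hz hg
  have hQWx : Q • W • x = 0 := by
    rw [hWx, smul_comm, hh, smul_zero]
  have hWx_zero : W • x = 0 := matrix_smul_eq_zero_of_smul_smul_eq_zero hkerQ hQWx
  exact ⟨hQWx, hWx_zero, apply_eq_apply_of_matrix_smul_eq_zero hkerW hWx_zero⟩

/-- consensus part of the proof of Theorem 1 of the paper.
At any stopping point of the DAGP dynamics, the matrix `X` whose rows are the local
variables `x^v` satisfies `Q W X = 0`, hence `W X = 0`, hence all `x^v` are equal. -/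
theorem dagp_stopping_point_consensus (m M : ℕ)
    (W Q : Matrix (Fin M) (Fin M) ℝ)
    (hkerQ : ∀ y : Fin M → ℝ, Q.mulVec y = 0 ↔ W.transpose.mulVec y = 0)
    (hkerW : ∀ y : Fin M → ℝ, W.mulVec y = 0 ↔ ∃ c : ℝ, y = fun _ => c)
    (μ ρ α : ℝ) (hμ : 0 < μ) (hρ : ρ ≠ 0)
    (x z g h d : Fin M → (Fin m → ℝ))
    -- (i) the `z`-update is stationary (`d v` plays the role of `∇f_v(x^v)`)
    (hz : ∀ v, z v = x v - (∑ u, W v u • x u) - μ • (d v - g v))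
    -- (ii) the `g`-update is stationary
    (hg : ∀ v, ρ • (d v - g v + μ⁻¹ • (z v - x v)) + α • (h v - g v) = 0)
    -- (iii) the `h`-update is stationary
    (hh : ∀ v, ∑ u, Q v u • (h u - g u) = 0) :
    Q * (W * Matrix.of x) = 0 ∧ W * Matrix.of x = 0 ∧ ∀ u v, x u = x v := by
  simp only [← DAGP.of_matrix_smul]
  exact dagp_stopping_point_consensus_general (fun y ↦ (hkerQ y).1) (fun y ↦ (hkerW y).1)
    hμ.ne' hρ (funext hz) (funext hg) (funext hh)
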